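/- arXiv:2603.18878 — 2 statements merged into one kernel-verified Lean document; each statement's English description precedes it below -/
import Mathlib

section
/- Let (V, E) be a rooted leafless directed tree, let λ = (λ_v)_{v∈V} be nonzero real or complex weights, and suppose the weighted backward shift B_λ defines a bounded linear operator on X = c0(V). Then B_λ is chain recurrent if and only if for every v ∈ V, ∑_{n=1}^∞ ∑_{u ∈ Child^n(v)} |λ(v→u)| = ∞. -/
/-!
The pseudo-orbits of a linear operator `T` starting at `x` are exactly the sequences
`f n = T ^ n x + ∑ j < n, T ^ j (e j)` with small errors `e j`, so both implications are statements
about such sums. Write `S v` for the sum over `n ≥ 0` of the level sums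
`levelSum n v = ∑ u ∈ Child^n(v), |λ(v → u)|`.

*Divergence is necessary.* The recursion `levelSum (n + 1) v ≥ ∑ c ∈ Child(v), |w c| levelSum n c`
shows that errors of size less than `δ` contribute at most `δ * S v` to the value at `v`
(`chain_bound`). The indicator of `v` satisfies `(T ^ n 1_v) v = 0` for `n ≥ 1`, so a chain from
`1_v` to itself forces `1 ≤ δ * S v`, which is impossible for small `δ` if `S v < ∞`.

*Divergence is sufficient.* If `u ∈ Child^n(v)` then `T ^ n 1_u = λ(v → u) 1_v`
(`pow_apply_indic`). Hence unimodular multiples of the `1_u` add up coherently at `v` and at no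
other vertex: as `S v = ∞`, any multiple of `1_v` is a sum `∑ T ^ j (e j)` with arbitrarily small
`e j` (`smul_indic_reachable`). By additivity and density every vector is reachable from `0`. In the
other direction every vector reaches `0`: perturb `T x` to a finitely supported vector, which `T`
annihilates after finitely many steps because the tree has a root.
-/

open Filter Function
open scoped ENNReal NNReal

noncomputable section

/-- A `δ`-chain for `T` from `x` to `y`. -/
def HasDeltaChain {X : Type*} [PseudoMetricSpace X] (T : X → X) (δ : ℝ) (x y : X) : Prop :=
  ∃ n : ℕ, 1 ≤ n ∧ ∃ f : ℕ → X, f 0 = x ∧ f n = y ∧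
    ∀ l : ℕ, 1 ≤ l → l ≤ n → dist (T (f (l - 1))) (f l) < δ

/-- `T` is chain recurrent if for every `x` and every `δ > 0` there is a `δ`-chain for
`T` from `x` to itself. -/
def ChainRecurrent {X : Type*} [PseudoMetricSpace X] (T : X → X) : Prop :=
  ∀ x : X, ∀ δ : ℝ, 0 < δ → HasDeltaChain T δ x x

/-- For `u ∈ Child^n(v)`, `pathWeight parent w n u = λ(v → u)`, the product of the
weights along the path from `v = parent^[n] u` to `u`; in particular `λ(v → v) = 1`. -/
def pathWeight {V 𝕜 : Type*} [RCLike 𝕜] (parent : V → V) (w : V → 𝕜) (n : ℕ) (u : V) : 𝕜 :=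
  ∏ i ∈ Finset.range n, w (parent^[i] u)

/-! ### Chains as transitive closures -/

/-- One step of a `δ`-chain for `T`. -/
def ChainStep {X : Type*} [PseudoMetricSpace X] (T : X → X) (δ : ℝ) (x y : X) : Prop :=
  dist (T x) y < δ

theorem hasDeltaChain_iff {X : Type*} [PseudoMetricSpace X] (T : X → X) (δ : ℝ) (x y : X) :
    HasDeltaChain T δ x y ↔ Relation.TransGen (ChainStep T δ) x y := by
  constructor
  · rintro ⟨n, hn, f, rfl, rfl, h⟩
    have key : ∀ m, 1 ≤ m → m ≤ n → Relation.TransGen (ChainStep T δ) (f 0) (f m) := by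
      intro m hm
      induction m, hm using Nat.le_induction with
      | base => exact fun hn => .single (by simpa [ChainStep] using h 1 le_rfl hn)
      | succ m hm ih =>
        exact fun hn => .tail (ih (by omega)) (by simpa [ChainStep] using h (m + 1) (by omega) hn)
    exact key n hn le_rfl
  · intro h
    induction h with
    | @single b h =>
      refine ⟨1, le_rfl, fun k => if k = 0 then x else b, by simp, by simp, fun l h1 h2 => ?_⟩
      obtain rfl : l = 1 := by omega
      simpa [ChainStep] using h
    | @tail b c _ h ih =>
      obtain ⟨n, hn, f, h0, hn', hf⟩ := ih
      refine ⟨n + 1, by omega, fun k => if k ≤ n then f k else c, by simpa using h0, by simp,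
        fun l h1 h2 => ?_⟩
      rcases Nat.lt_or_ge n l with hl | hl
      · obtain rfl : l = n + 1 := by omega
        simpa [hn', ChainStep] using h
      · simpa [hl, show l ≤ n + 1 by omega] using hf l h1 hl

section Linear

variable {𝕜 X : Type*} [RCLike 𝕜] [NormedAddCommGroup X] [NormedSpace 𝕜 X]

/-- The vector `y` can be reached from `0` by chains with arbitrarily small errors: it is a finite
sum of vectors `T ^ j (e j)` with all `e j` as small as desired. -/
def Reachable (T : X →L[𝕜] X) (y : X) : Prop :=
  ∀ δ : ℝ, 0 < δ → ∃ e : ℕ →₀ X, (∀ j, ‖e j‖ < δ) ∧ (e.sum fun j x => (T ^ j) x) = y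

theorem Reachable.zero (T : X →L[𝕜] X) : Reachable T 0 :=
  fun δ hδ => ⟨0, by simpa using hδ, by simp⟩

theorem Reachable.add {T : X →L[𝕜] X} {y z : X} (hy : Reachable T y) (hz : Reachable T z) :
    Reachable T (y + z) := by
  intro δ hδ
  obtain ⟨e, he, rfl⟩ := hy (δ / 2) (half_pos hδ)
  obtain ⟨e', he', rfl⟩ := hz (δ / 2) (half_pos hδ)
  refine ⟨e + e', fun j => ?_, Finsupp.sum_add_index' (by simp) (by simp)⟩
  calc ‖(e + e') j‖ ≤ ‖e j‖ + ‖e' j‖ := norm_add_le _ _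
    _ < δ := by linarith [he j, he' j]

/-- Reachability is a closed condition: an approximation error can be absorbed in the last error of
the chain. -/
theorem Reachable.of_approx {T : X →L[𝕜] X} {x : X}
    (h : ∀ ε : ℝ, 0 < ε → ∃ y, Reachable T y ∧ ‖x - y‖ < ε) : Reachable T x := by
  intro δ hδ
  obtain ⟨y, hy, hxy⟩ := h (δ / 2) (half_pos hδ)
  obtain ⟨e, he, hey⟩ := hy (δ / 2) (half_pos hδ)
  refine ⟨e + Finsupp.single 0 (x - y), fun j => ?_, ?_⟩
  · have h1 : ‖Finsupp.single 0 (x - y) j‖ < δ / 2 := by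
      rw [Finsupp.single_apply]
      split_ifs
      · exact hxy
      · simpa using half_pos hδ
    calc ‖(e + Finsupp.single 0 (x - y) : ℕ →₀ X) j‖ ≤ ‖e j‖ + ‖Finsupp.single 0 (x - y) j‖ :=
          norm_add_le _ _
      _ < δ := by linarith [he j]
  · rw [Finsupp.sum_add_index' (by simp) (by simp), hey, Finsupp.sum_single_index (by simp)]
    simp

/-- A sum `∑ T ^ j (e j)` is the end of the chain from `0` whose errors are the `e j` in reverse
order. -/
theorem reflTransGen_sum (T : X →L[𝕜] X) (δ : ℝ) (n : ℕ) :
    ∀ e : ℕ → X, (∀ j, ‖e j‖ < δ) → Relation.ReflTransGen (ChainStep (fun f => T f) δ) 0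
      (∑ j ∈ Finset.range n, (T ^ j) (e j)) := by
  induction n with
  | zero => intro e _; simpa using Relation.ReflTransGen.refl
  | succ n ih =>
    intro e he
    refine .tail (ih (fun j => e (j + 1)) fun j => he _) ?_
    rw [Finset.sum_range_succ']
    simp only [ChainStep, map_sum, pow_succ', mul_apply_eq_comp]
    simpa [dist_eq_norm] using he 0

theorem Reachable.reflTransGen {T : X →L[𝕜] X} {y : X} (hy : Reachable T y) {δ : ℝ}
    (hδ : 0 < δ) : Relation.ReflTransGen (ChainStep (fun f => T f) δ) 0 y := by
  obtain ⟨e, he, rfl⟩ := hy δ hδ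
  obtain ⟨n, hn⟩ := e.support.exists_nat_subset_range
  rw [Finsupp.sum_of_support_subset e hn _ (by simp)]
  exact reflTransGen_sum T δ n e he

theorem reflTransGen_pow (T : X →L[𝕜] X) {δ : ℝ} (hδ : 0 < δ) (x : X) (n : ℕ) :
    Relation.ReflTransGen (ChainStep (fun f => T f) δ) x ((T ^ n) x) := by
  induction n with
  | zero => simpa using Relation.ReflTransGen.refl
  | succ n ih =>
    refine .tail ih ?_
    simpa [ChainStep, pow_succ'] using hδ

end Linear

/-! ### Finitely supported vectors in `c₀(V)` -/

section Indicator

variable {V : Type*} [TopologicalSpace V] {𝕜 : Type*} [RCLike 𝕜]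

open Classical in
/-- The indicator of the vertex `v`, as an element of `c₀(V)`. -/
def indic (𝕜 : Type*) [RCLike 𝕜] [DiscreteTopology V] (v : V) : ZeroAtInftyContinuousMap V 𝕜 where
  toFun u := if u = v then 1 else 0
  continuous_toFun := continuous_of_discreteTopology
  zero_at_infty' := by
    rw [Filter.cocompact_eq_cofinite]
    refine tendsto_const_nhds.congr' ?_
    filter_upwards [(Set.finite_singleton v).compl_mem_cofinite] with u hu
    exact (if_neg hu).symm

theorem indic_self [DiscreteTopology V] (v : V) : indic 𝕜 v v = 1 := if_pos rfl

theorem indic_of_ne [DiscreteTopology V] {u v : V} (h : u ≠ v) : indic 𝕜 v u = 0 := if_neg h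

theorem sum_coe {ι : Type*} (s : Finset ι) (F : ι → ZeroAtInftyContinuousMap V 𝕜) (u : V) :
    (∑ p ∈ s, F p) u = ∑ p ∈ s, F p u := by
  classical
  induction s using Finset.induction_on with
  | empty => simp
  | insert a s ha ih => simp [Finset.sum_insert ha, ih]

theorem norm_le_of_forall {f : ZeroAtInftyContinuousMap V 𝕜} {M : ℝ} (hM : 0 ≤ M)
    (h : ∀ u, ‖f u‖ ≤ M) : ‖f‖ ≤ M := by
  rw [← ZeroAtInftyContinuousMap.norm_toBCF_eq_norm]
  exact (BoundedContinuousFunction.norm_le hM).2 h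

theorem norm_apply_le (f : ZeroAtInftyContinuousMap V 𝕜) (u : V) : ‖f u‖ ≤ ‖f‖ := by
  rw [← ZeroAtInftyContinuousMap.norm_toBCF_eq_norm]
  exact BoundedContinuousFunction.norm_coe_le_norm f.toBCF u

/-- In the supremum norm, a combination of indicators of distinct vertices is no larger than its
largest coefficient. -/
theorem norm_sum_indic_le [DiscreteTopology V] {ι : Type*} (s : Finset ι)
    (g : ι → V) (hg : Function.Injective g) (a : ι → 𝕜) {M : ℝ} (hM : 0 ≤ M) (ha : ∀ p, ‖a p‖ ≤ M) :
    ‖∑ p ∈ s, a p • indic 𝕜 (g p)‖ ≤ M := by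
  refine norm_le_of_forall hM fun u => ?_
  rw [sum_coe]
  by_cases h : ∃ p ∈ s, g p = u
  · obtain ⟨p, hp, rfl⟩ := h
    rw [Finset.sum_eq_single p]
    · simpa [indic_self] using ha p
    · intro q _ hq
      simp [indic_of_ne (𝕜 := 𝕜) (fun h => hq (hg h).symm)]
    · exact fun h => absurd hp h
  · push Not at h
    rw [Finset.sum_eq_zero]
    · simpa using hM
    · intro p hp
      simp [indic_of_ne (𝕜 := 𝕜) (h p hp).symm]

/-- Finitely supported vectors are dense in `c₀(V)`. -/
theorem exists_finite_approx [DiscreteTopology V] (f : ZeroAtInftyContinuousMap V 𝕜)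
    {ε : ℝ} (hε : 0 < ε) :
    ∃ s : Finset V, ‖f - ∑ v ∈ s, f v • indic 𝕜 v‖ < ε := by
  have h := f.zero_at_infty'
  rw [Filter.cocompact_eq_cofinite] at h
  have h2 : {u | ¬ ‖f u‖ < ε / 2}.Finite := by
    have := h.eventually (Metric.ball_mem_nhds (0 : 𝕜) (half_pos hε))
    simpa [Filter.eventually_cofinite] using this
  refine ⟨h2.toFinset, lt_of_le_of_lt (norm_le_of_forall (half_pos hε).le fun u => ?_)
    (half_lt_self hε)⟩
  rw [ZeroAtInftyContinuousMap.sub_apply, sum_coe]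
  by_cases hu : ‖f u‖ < ε / 2
  · rw [Finset.sum_eq_zero]
    · simpa using hu.le
    · intro p hp
      have : u ≠ p := by
        rintro rfl
        simp at hp
        linarith
      simp [indic_of_ne (𝕜 := 𝕜) this]
  · rw [Finset.sum_eq_single u]
    · simpa [indic_self] using (half_pos hε).le
    · intro q _ hq
      simp [indic_of_ne (𝕜 := 𝕜) hq.symm]
    · intro h
      exact absurd (by simpa using hu) h

end Indicator

/-! ### Level sums of path weights -/

/-- The sum of `|λ(v → u)|` over all `u ∈ Child^n(v)`. The condition on depths excludes the root
from its own descendants, as `parent root = root`. -/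
def levelSum {V 𝕜 : Type*} [RCLike 𝕜] (parent : V → V) (depth : V → ℕ) (w : V → 𝕜)
    (n : ℕ) (v : V) : ℝ≥0∞ :=
  ∑' u : {u : V // parent^[n] u = v ∧ depth u = depth v + n},
    (‖pathWeight parent w n (u : V)‖₊ : ℝ≥0∞)

section Tree

variable {V : Type*} {𝕜 : Type*} [RCLike 𝕜] (parent : V → V) (depth : V → ℕ) (w : V → 𝕜)

theorem levelSum_zero (v : V) : levelSum parent depth w 0 v = 1 := by
  unfold levelSum
  rw [tsum_eq_single ⟨v, by simp⟩]
  · simp [pathWeight]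
  · rintro ⟨u, hu⟩ h
    exact absurd (Subtype.ext (by simpa using hu.1)) h

theorem sum_levelSum_le (n : ℕ) (v : V) :
    ∑ k ∈ Finset.range n, levelSum parent depth w k v ≤
      1 + ∑' k, levelSum parent depth w (k + 1) v := by
  refine (ENNReal.sum_le_tsum (f := fun k => levelSum parent depth w k v) _).trans (le_of_eq ?_)
  rw [tsum_eq_zero_add' (f := fun k => levelSum parent depth w k v) ENNReal.summable,
    levelSum_zero]

/-- One half of the recursion obtained by splitting a path at the first vertex below `v`. -/
theorem tsum_mul_levelSum_le (n : ℕ) (v : V) :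
    ∑' c : {c : V // parent c = v ∧ depth c = depth v + 1},
      ‖w c‖ₑ * levelSum parent depth w n c ≤ levelSum parent depth w (n + 1) v := by
  unfold levelSum
  simp_rw [← ENNReal.tsum_mul_left]
  rw [← ENNReal.tsum_sigma]
  let φ : (Σ c : {c : V // parent c = v ∧ depth c = depth v + 1},
      {u : V // parent^[n] u = c ∧ depth u = depth c + n}) →
      {u : V // parent^[n + 1] u = v ∧ depth u = depth v + (n + 1)} := fun p =>
    ⟨p.2, by rw [Function.iterate_succ_apply', p.2.2.1, p.1.2.1],
      by rw [p.2.2.2, p.1.2.2]; ring⟩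
  have hφ : Function.Injective φ := by
    rintro ⟨⟨c, hc⟩, ⟨u, hu⟩⟩ ⟨⟨c', hc'⟩, ⟨u', hu'⟩⟩ h
    obtain rfl : u = u' := congrArg Subtype.val h
    obtain rfl : c = c' := hu.1.symm.trans hu'.1
    rfl
  refine le_trans (le_of_eq ?_) (ENNReal.tsum_comp_le_tsum_of_injective hφ _)
  refine tsum_congr ?_
  rintro ⟨⟨c, hc⟩, ⟨u, hu⟩⟩
  have : pathWeight parent w (n + 1) u = pathWeight parent w n u * w c := by
    rw [pathWeight, Finset.prod_range_succ, hu.1]; rfl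
  simp [φ, this, mul_comm, enorm_eq_nnnorm]

end Tree

theorem depth_iterate {V : Type*} {root : V} {parent : V → V} {depth : V → ℕ}
    (hdepth : ∀ v : V, v ≠ root → depth v = depth (parent v) + 1) (hdepth0 : depth root = 0)
    {u : V} (n : ℕ) (hu : n ≤ depth u) : depth (parent^[n] u) + n = depth u := by
  induction n with
  | zero => simp
  | succ n ih =>
    have h := ih (by omega)
    have hr : parent^[n] u ≠ root := by
      intro h'
      rw [h'] at h
      omega
    have := hdepth _ hr
    rw [Function.iterate_succ_apply']
    omega

/-! ### The weighted backward shift -/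

section Shift

variable {V : Type*} [TopologicalSpace V] {𝕜 : Type*} [RCLike 𝕜]
  {root : V} {parent : V → V} {depth : V → ℕ} {w : V → 𝕜}
  {T : ZeroAtInftyContinuousMap V 𝕜 →L[𝕜] ZeroAtInftyContinuousMap V 𝕜}

/-- The shift moves supports towards the root. -/
theorem pow_apply_eq_zero
    (hT : ∀ (f : ZeroAtInftyContinuousMap V 𝕜) (v : V),
      T f v = ∑' u : {u : V // parent u = v ∧ depth u = depth v + 1}, w (u : V) * f (u : V))
    {f : ZeroAtInftyContinuousMap V 𝕜} {D : ℕ} (hf : ∀ u, D ≤ depth u → f u = 0) (n : ℕ) :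
    ∀ u, D ≤ depth u + n → (T ^ n) f u = 0 := by
  induction n with
  | zero => simpa using hf
  | succ n ih =>
    intro u hu
    rw [pow_succ', mul_apply_eq_comp, hT]
    refine (tsum_congr fun c => ?_).trans tsum_zero
    rw [ih c (by rw [c.2.2]; omega), mul_zero]

theorem apply_indic
    [DiscreteTopology V]
    (hdepth : ∀ v : V, v ≠ root → depth v = depth (parent v) + 1) (hdepth0 : depth root = 0)
    (hT : ∀ (f : ZeroAtInftyContinuousMap V 𝕜) (v : V),
      T f v = ∑' u : {u : V // parent u = v ∧ depth u = depth v + 1}, w (u : V) * f (u : V))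
    {u : V} (hu : 1 ≤ depth u) : T (indic 𝕜 u) = w u • indic 𝕜 (parent u) := by
  have hur : u ≠ root := by rintro rfl; omega
  ext v
  rw [hT, ZeroAtInftyContinuousMap.smul_apply]
  by_cases hv : parent u = v
  · subst hv
    rw [tsum_eq_single ⟨u, rfl, hdepth u hur⟩]
    · simp [indic_self]
    · rintro ⟨c, hc⟩ h
      have : c ≠ u := fun h' => h (Subtype.ext h')
      simp [indic_of_ne (𝕜 := 𝕜) this]
  · rw [indic_of_ne (Ne.symm hv), smul_zero]
    refine (tsum_congr fun c => ?_).trans tsum_zero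
    have : (c : V) ≠ u := fun h => hv (h ▸ c.2.1)
    rw [indic_of_ne this, mul_zero]

/-- The condition `n ≤ depth u` keeps the path inside the tree: the root is not a child of itself,
although `parent root = root`. -/
theorem pow_apply_indic
    [DiscreteTopology V]
    (hdepth : ∀ v : V, v ≠ root → depth v = depth (parent v) + 1) (hdepth0 : depth root = 0)
    (hT : ∀ (f : ZeroAtInftyContinuousMap V 𝕜) (v : V),
      T f v = ∑' u : {u : V // parent u = v ∧ depth u = depth v + 1}, w (u : V) * f (u : V))
    {u : V} (n : ℕ) (hu : n ≤ depth u) :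
    (T ^ n) (indic 𝕜 u) = pathWeight parent w n u • indic 𝕜 (parent^[n] u) := by
  induction n with
  | zero => simp [pathWeight]
  | succ n ih =>
    have := depth_iterate hdepth hdepth0 n (u := u) (by omega)
    rw [pow_succ', mul_apply_eq_comp, ih (by omega), map_smul,
      apply_indic hdepth hdepth0 hT (by omega), smul_smul, Function.iterate_succ_apply',
      pathWeight, pathWeight, Finset.prod_range_succ]

theorem enorm_apply_le
    (hT : ∀ (f : ZeroAtInftyContinuousMap V 𝕜) (v : V),
      T f v = ∑' u : {u : V // parent u = v ∧ depth u = depth v + 1}, w (u : V) * f (u : V))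
    (f : ZeroAtInftyContinuousMap V 𝕜) (v : V) :
    ‖T f v‖ₑ ≤ ∑' u : {u : V // parent u = v ∧ depth u = depth v + 1}, ‖w u‖ₑ * ‖f u‖ₑ := by
  rw [hT]
  refine enorm_tsum_le_tsum_enorm.trans (le_of_eq (tsum_congr fun c => ?_))
  rw [enorm_mul]

/-- If a `δ`-chain leads from `x` to `y` in `n` steps, then `y` differs from `T ^ n x` at `u` by at
most `δ` times the sum of the level sums at `u` up to level `n - 1`. -/
theorem chain_bound
    (hT : ∀ (f : ZeroAtInftyContinuousMap V 𝕜) (v : V),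
      T f v = ∑' u : {u : V // parent u = v ∧ depth u = depth v + 1}, w (u : V) * f (u : V))
    {δ : ℝ} {x y : ZeroAtInftyContinuousMap V 𝕜}
    (h : Relation.TransGen (ChainStep (fun f => T f) δ) x y) :
    ∃ n, 1 ≤ n ∧ ∀ u, ‖(y - (T ^ n) x) u‖ₑ ≤
      ENNReal.ofReal δ * ∑ k ∈ Finset.range n, levelSum parent depth w k u := by
  have step : ∀ {a b : ZeroAtInftyContinuousMap V 𝕜}, ChainStep (fun f => T f) δ a b → ∀ u,
      ‖(b - T a) u‖ₑ ≤ ENNReal.ofReal δ := by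
    intro a b hab u
    rw [← ofReal_norm]
    refine ENNReal.ofReal_le_ofReal ((norm_apply_le _ u).trans ?_)
    rw [← dist_eq_norm, dist_comm]
    exact le_of_lt hab
  induction h with
  | single h =>
    refine ⟨1, le_rfl, fun u => ?_⟩
    simpa [levelSum_zero] using step h u
  | @tail b c _ h ih =>
    obtain ⟨n, hn, hb⟩ := ih
    refine ⟨n + 1, by omega, fun u => ?_⟩
    have e1 : (c - (T ^ (n + 1)) x) u = (c - T b) u + T (b - (T ^ n) x) u := by
      simp [pow_succ']
    rw [e1]
    refine (enorm_add_le _ _).trans ?_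
    rw [Finset.sum_range_succ', levelSum_zero, mul_add, mul_one, add_comm]
    refine add_le_add ((enorm_apply_le hT _ u).trans ?_) (step h u)
    calc ∑' c : {c : V // parent c = u ∧ depth c = depth u + 1},
          ‖w c‖ₑ * ‖(b - (T ^ n) x) c‖ₑ
        ≤ ∑' c : {c : V // parent c = u ∧ depth c = depth u + 1},
          ∑ k ∈ Finset.range n,
            ENNReal.ofReal δ * (‖w c‖ₑ * levelSum parent depth w k c) := by
          refine ENNReal.tsum_le_tsum fun c => ?_
          refine (mul_le_mul_right (hb c) _).trans (le_of_eq ?_)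
          rw [Finset.mul_sum, Finset.mul_sum]
          exact Finset.sum_congr rfl fun k _ => by ring
      _ = ENNReal.ofReal δ * ∑ k ∈ Finset.range n,
          ∑' c : {c : V // parent c = u ∧ depth c = depth u + 1},
            (‖w c‖ₑ * levelSum parent depth w k c) := by
          rw [Summable.tsum_finsetSum fun _ _ => ENNReal.summable, Finset.mul_sum]
          exact Finset.sum_congr rfl fun k _ => ENNReal.tsum_mul_left
      _ ≤ _ := by
          gcongr with k
          exact tsum_mul_levelSum_le parent depth w k u

/-- If the level sums at `v` have infinite total, every multiple of the indicator of `v` is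
reachable from `0`. -/
theorem smul_indic_reachable
    [DiscreteTopology V]
    (hdepth : ∀ v : V, v ≠ root → depth v = depth (parent v) + 1) (hdepth0 : depth root = 0)
    (hT : ∀ (f : ZeroAtInftyContinuousMap V 𝕜) (v : V),
      T f v = ∑' u : {u : V // parent u = v ∧ depth u = depth v + 1}, w (u : V) * f (u : V))
    (hw : ∀ v : V, w v ≠ 0) {v : V}
    (hv : ∑' n, levelSum parent depth w (n + 1) v = ⊤) (c : 𝕜) :
    Reachable T (c • indic 𝕜 v) := by
  intro δ hδ
  unfold levelSum at hv
  rw [← ENNReal.tsum_sigma, ENNReal.tsum_eq_iSup_sum] at hv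
  obtain ⟨s, hs⟩ := lt_iSup_iff.1 (hv ▸ ENNReal.ofReal_lt_top :
    ENNReal.ofReal (‖c‖ / δ) < _)
  -- `s` is a finite set of descendants `u` of `v`, each paired with its level below `v`.
  set S : ℝ := ∑ p ∈ s, ‖pathWeight parent w (p.1 + 1) (p.2 : V)‖ with hS
  have hS0 : 0 ≤ S := Finset.sum_nonneg fun _ _ => norm_nonneg _
  have hlt : ‖c‖ / δ < S := by
    have : (∑ p ∈ s, (‖pathWeight parent w (p.1 + 1) (p.2 : V)‖₊ : ℝ≥0∞)) = ENNReal.ofReal S := by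
      rw [hS, ENNReal.ofReal_sum_of_nonneg fun _ _ => norm_nonneg _]
      exact Finset.sum_congr rfl fun p _ => by rw [ofReal_norm]; rfl
    rw [this] at hs
    exact (ENNReal.ofReal_lt_ofReal_iff_of_nonneg (by positivity)).1 hs
  have hSpos : 0 < S := lt_of_le_of_lt (by positivity) hlt
  have hcS : ‖c‖ / S < δ := by
    rw [div_lt_iff₀ hδ] at hlt
    rw [div_lt_iff₀ hSpos]
    linarith
  have hpw : ∀ n u, pathWeight parent w n u ≠ 0 := fun n u =>
    Finset.prod_ne_zero_iff.2 fun _ _ => hw _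
  -- The phases make every path contribute the positive amount `|λ(v → u)|` at `v`.
  let a : (Σ n : ℕ, {u : V // parent^[n + 1] u = v ∧ depth u = depth v + (n + 1)}) → 𝕜 :=
    fun p => c / S * (‖pathWeight parent w (p.1 + 1) (p.2 : V)‖ /
      pathWeight parent w (p.1 + 1) (p.2 : V))
  have ha : ∀ p, ‖a p‖ = ‖c‖ / S := by
    intro p
    have := norm_ne_zero_iff.2 (hpw (p.1 + 1) p.2)
    simp [a, abs_of_pos hSpos, div_self this]
  refine ⟨∑ p ∈ s, Finsupp.single (p.1 + 1) (a p • indic 𝕜 (p.2 : V)), fun j => ?_, ?_⟩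
  · refine lt_of_le_of_lt ?_ hcS
    have hinj : Function.Injective fun p : (Σ n : ℕ,
        {u : V // parent^[n + 1] u = v ∧ depth u = depth v + (n + 1)}) => (p.2 : V) := by
      rintro ⟨n, u, hu⟩ ⟨m, u', hu'⟩ h
      obtain rfl : u = u' := h
      obtain rfl : n = m := by omega
      rfl
    have := norm_sum_indic_le s (fun p => (p.2 : V)) hinj
      (fun p => if p.1 + 1 = j then a p else 0) (M := ‖c‖ / S) (by positivity) (fun p => by
        split_ifs
        · exact (ha p).le
        · simpa using (by positivity : 0 ≤ ‖c‖ / S))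
    rw [Finsupp.finsetSum_apply]
    simpa [Finsupp.single_apply, ite_smul] using this
  · rw [← Finsupp.sum_finsetSum_index (by simp) (by simp)]
    have h1 : ∀ p ∈ s, ((Finsupp.single (p.1 + 1) (a p • indic 𝕜 (p.2 : V))).sum
        fun j x => (T ^ j) x) =
        (c / S * (‖pathWeight parent w (p.1 + 1) (p.2 : V)‖ : 𝕜)) • indic 𝕜 v := by
      intro p _
      rw [Finsupp.sum_single_index (by simp), map_smul,
        pow_apply_indic hdepth hdepth0 hT _ (by rw [p.2.2.2]; omega), p.2.2.1, smul_smul]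
      congr 1
      have := hpw (p.1 + 1) p.2
      simp only [a]
      field_simp
    rw [Finset.sum_congr rfl h1, ← Finset.sum_smul, ← Finset.mul_sum]
    congr 1
    have h2 : (∑ p ∈ s, (‖pathWeight parent w (p.1 + 1) (p.2 : V)‖ : 𝕜)) = (S : 𝕜) := by
      rw [hS]; push_cast; rfl
    rw [h2]
    have : (S : 𝕜) ≠ 0 := by exact_mod_cast hSpos.ne'
    field_simp

end Shift

/-- Characterization of chain recurrence of a weighted backward shift on `c₀(V)` over a
rooted leafless directed tree; `c₀(V)` is realized as the space of functions vanishing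
at infinity on the discrete space `V`. -/
theorem stmt10 {V : Type*} [Countable V] [TopologicalSpace V] [DiscreteTopology V]
    {𝕜 : Type*} [RCLike 𝕜]
    (root : V) (parent : V → V) (depth : V → ℕ)
    (hroot : parent root = root) (hdepth0 : depth root = 0)
    (hdepth : ∀ v : V, v ≠ root → depth v = depth (parent v) + 1)
    (hleafless : ∀ v : V, ∃ u : V, parent u = v ∧ depth u = depth v + 1)
    (w : V → 𝕜) (hw : ∀ v : V, w v ≠ 0)
    (T : ZeroAtInftyContinuousMap V 𝕜 →L[𝕜] ZeroAtInftyContinuousMap V 𝕜)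
    (hT : ∀ (f : ZeroAtInftyContinuousMap V 𝕜) (v : V),
      T f v = ∑' u : {u : V // parent u = v ∧ depth u = depth v + 1}, w (u : V) * f (u : V)) :
    ChainRecurrent (fun f => T f) ↔
      ∀ v : V,
        (∑' n : ℕ, ∑' u : {u : V // parent^[n + 1] u = v ∧ depth u = depth v + (n + 1)},
            (‖pathWeight parent w (n + 1) (u : V)‖₊ : ℝ≥0∞)) = ⊤ := by
  constructor
  · intro hcr v
    by_contra hfin
    have hA : (1 : ℝ≥0∞) + ∑' n, levelSum parent depth w (n + 1) v ≠ ⊤ :=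
      ENNReal.add_ne_top.2 ⟨ENNReal.one_ne_top, hfin⟩
    have hsum := sum_levelSum_le parent depth w (v := v)
    have hone : (1 : ℝ≥0∞) ≤ 1 + ∑' n, levelSum parent depth w (n + 1) v := le_self_add
    generalize (1 : ℝ≥0∞) + ∑' n, levelSum parent depth w (n + 1) v = A at hA hsum hone
    have hA1 : 1 ≤ A.toReal := by simpa using ENNReal.toReal_mono hA hone
    have hδ : 0 < 1 / (2 * A.toReal) := by positivity
    obtain ⟨n, hn, hb⟩ := chain_bound (parent := parent) (depth := depth) (w := w) hT
      ((hasDeltaChain_iff _ _ _ _).1 (hcr (indic 𝕜 v) _ hδ))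
    have hz : (T ^ n) (indic 𝕜 v) v = 0 := by
      refine pow_apply_eq_zero hT (D := depth v + 1) (fun u hu => indic_of_ne ?_) n v (by omega)
      rintro rfl
      omega
    have h1 := hb v
    rw [ZeroAtInftyContinuousMap.sub_apply, hz, indic_self, sub_zero, enorm_one] at h1
    have h3 := h1.trans (mul_le_mul_right (hsum n) _)
    have h4 := ENNReal.toReal_mono (ENNReal.mul_ne_top ENNReal.ofReal_ne_top hA) h3
    rw [ENNReal.toReal_mul, ENNReal.toReal_ofReal hδ.le, ENNReal.toReal_one] at h4
    have h5 : 1 / (2 * A.toReal) * A.toReal = 1 / 2 := by field_simp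
    linarith
  · intro hv
    have hfs : ∀ (s : Finset V) (a : V → 𝕜), Reachable T (∑ v ∈ s, a v • indic 𝕜 v) :=
      fun s a => Finset.sum_induction _ _ (fun _ _ => Reachable.add) (Reachable.zero T)
        fun v _ => smul_indic_reachable hdepth hdepth0 hT hw (hv v) (a v)
    have hreach : ∀ x, Reachable T x := fun x => Reachable.of_approx fun ε hε => by
      obtain ⟨s, hs⟩ := exists_finite_approx x hε
      exact ⟨_, hfs s _, hs⟩
    intro x δ hδ
    rw [hasDeltaChain_iff]
    obtain ⟨s, hs⟩ := exists_finite_approx (T x) hδ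
    set y := ∑ v ∈ s, T x v • indic 𝕜 v
    have hxy : ChainStep (fun f => T f) δ x y := by
      rw [ChainStep, dist_eq_norm]
      exact hs
    -- A power of `T` exceeding all depths in the support annihilates `y`.
    have hy0 : (T ^ (s.sup depth + 1)) y = 0 := by
      ext u
      refine pow_apply_eq_zero hT (D := s.sup depth + 1) (fun u hu => ?_) _ u (by omega)
      rw [sum_coe]
      refine Finset.sum_eq_zero fun p hp => ?_
      have hpu : u ≠ p := by
        rintro rfl
        have := Finset.le_sup (f := depth) hp
        omega
      simp [indic_of_ne (𝕜 := 𝕜) hpu]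
    have hyz := reflTransGen_pow T hδ y (s.sup depth + 1)
    rw [hy0] at hyz
    exact Relation.TransGen.trans_left (.single hxy) (hyz.trans ((hreach x).reflTransGen hδ))
end
end

section
/- Let (V, E) be a rooted leafless directed tree and let λ be a nonzero real or complex scalar. The Rolewicz operator λB (the weighted backward shift with constant weight λ at every vertex, which is automatically bounded on ℓ1(V)) is chain recurrent on ℓ1(V) if and only if |λ| ≥ 1. -/
/-!
If `‖l‖ < 1`, then `T` is a strict contraction (`norm_rolewicz_le`), and along a `δ`-chain the
norm satisfies `‖f k‖ ≤ ‖l‖ * ‖f (k - 1)‖ + δ`. A chain therefore cannot return to a vector of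
norm one once `δ` is small.

If `1 ≤ ‖l‖`, unrolling a chain of length `N` from `x` to `x` with errors `d k` shows that such a
chain exists as soon as `x = T ^ N x + ∑ k < N, T ^ k (d k)` with all `d k` small; this linear
condition is `LoopError`. The vectors satisfying it for every bound `δ` and all large `N` are closed
under addition (`LoopError.add`), and every vector `z` satisfies it with the constant errors
`d k = z - T z`, which are small if `z` is (`loopError_of_small`). By density of finitely
supported vectors it remains to treat `x = a • e_v`. There `T ^ N x = 0` for `N > depth v`, and along
a ray `v = v₀, v₁, …` of descendants the errors `d k = (a / (N l ^ k)) • e_{v_k}` satisfy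
`T ^ k (d k) = (a / N) • e_v`, so they add up to `x`; since `1 ≤ ‖l‖`, they have norm at most
`‖a‖ / N`.
-/

open Filter Function
open scoped ENNReal NNReal

noncomputable section

section Chains

variable {𝕜 E : Type*} [RCLike 𝕜] [NormedAddCommGroup E] [NormedSpace 𝕜 E]

/-- `x` returns to itself after `N` steps of `T` with additive errors of norm less than `δ`, where
`d k` is the error made `k` steps before the end. -/
def LoopError (T : E →L[𝕜] E) (N : ℕ) (δ : ℝ) (x : E) : Prop :=
  ∃ d : ℕ → E, (∀ k, ‖d k‖ < δ) ∧ (T ^ N) x + ∑ k ∈ Finset.range N, (T ^ k) (d k) = x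

theorem LoopError.add {T : E →L[𝕜] E} {N : ℕ} {δ ε : ℝ} {x y : E}
    (hx : LoopError T N δ x) (hy : LoopError T N ε y) : LoopError T N (δ + ε) (x + y) := by
  obtain ⟨d, hd, hdx⟩ := hx
  obtain ⟨e, he, hey⟩ := hy
  refine ⟨fun k => d k + e k, fun k => (norm_add_le _ _).trans_lt (add_lt_add (hd k) (he k)), ?_⟩
  simp only [map_add, Finset.sum_add_distrib]
  rw [add_add_add_comm, hdx, hey]

/-- The constant error `z - T z` keeps the chain at `z`. -/
theorem loopError_of_small (T : E →L[𝕜] E) (N : ℕ) {δ : ℝ} {z : E}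
    (hz : ‖z - T z‖ < δ) : LoopError T N δ z := by
  refine ⟨fun _ => z - T z, fun _ => hz, ?_⟩
  induction N with
  | zero => simp
  | succ n ih =>
    rw [Finset.sum_range_succ, map_sub, ← mul_apply_eq_comp, ← pow_succ]
    refine Eq.trans ?_ ih
    abel

theorem LoopError.hasDeltaChain {T : E →L[𝕜] E} {N : ℕ} {δ : ℝ} {x : E} (hN : 1 ≤ N)
    (hx : LoopError T N δ x) : HasDeltaChain (fun f => T f) δ x x := by
  obtain ⟨d, hd, hdx⟩ := hx
  refine ⟨N, hN, fun k => (T ^ k) x + ∑ j ∈ Finset.range k, (T ^ j) (d (N - k + j)),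
    by simp, by simpa using hdx, ?_⟩
  intro k hk hkN
  obtain ⟨k, rfl⟩ := Nat.exists_eq_add_of_le' hk
  have key : (T ^ (k + 1)) x + ∑ j ∈ Finset.range (k + 1), (T ^ j) (d (N - (k + 1) + j))
      = T ((T ^ k) x + ∑ j ∈ Finset.range k, (T ^ j) (d (N - k + j))) + d (N - (k + 1)) := by
    rw [Finset.sum_range_succ', map_add, map_sum]
    have h : ∀ j, (T ^ (j + 1)) (d (N - (k + 1) + (j + 1))) = T ((T ^ j) (d (N - k + j))) := by
      intro j
      rw [pow_succ', mul_apply_eq_comp, show N - (k + 1) + (j + 1) = N - k + j by omega]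
    simp only [h, pow_succ' T k, mul_apply_eq_comp, pow_zero,
      one_apply_eq_self, add_zero, add_assoc]
  simp only [Nat.add_sub_cancel]
  rw [key, dist_self_add_right]
  exact hd _

/-- A strict contraction is not chain recurrent on a nontrivial space. -/
theorem not_chainRecurrent_of_contraction (T : E →L[𝕜] E) {r : ℝ} (hr0 : 0 ≤ r) (hr : r < 1)
    (hT : ∀ x, ‖T x‖ ≤ r * ‖x‖) {x : E} (hx : ‖x‖ = 1) :
    ¬ ChainRecurrent (fun f => T f) := by
  intro h
  -- The ball of radius `1` is mapped into the ball of radius `r`, and `r + δ < 1`.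
  obtain ⟨n, hn, f, h0, hfn, hf⟩ := h x ((1 - r) / 2) (by linarith)
  have step : ∀ k, k + 1 ≤ n → ‖f k‖ ≤ 1 → ‖f (k + 1)‖ < 1 := by
    intro k hk hk1
    have h1 := hf (k + 1) (by omega) hk
    simp only [Nat.add_sub_cancel, dist_eq_norm] at h1
    have h2 := norm_sub_norm_le (f (k + 1)) (T (f k))
    rw [norm_sub_rev] at h2
    have h3 := hT (f k)
    nlinarith
  have all : ∀ k, k ≤ n → ‖f k‖ ≤ 1 := by
    intro k
    induction k with
    | zero => intro _; rw [h0, hx]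
    | succ k ih => intro hk; exact (step k hk (ih (by omega))).le
  obtain ⟨m, rfl⟩ := Nat.exists_eq_add_of_le' hn
  have := step m le_rfl (all m (by omega))
  rw [hfn, hx] at this
  exact lt_irrefl _ this

end Chains

section Tree

variable {V : Type*} {𝕜 : Type*} [RCLike 𝕜]
  {root : V} {parent : V → V} {depth : V → ℕ} {l : 𝕜}
  {T : lp (fun _ : V => 𝕜) 1 →L[𝕜] lp (fun _ : V => 𝕜) 1}

open Classical in
theorem rolewicz_single
    (hT : ∀ (f : lp (fun _ : V => 𝕜) 1) (v : V),
      T f v = l * ∑' u : {u : V // parent u = v ∧ depth u = depth v + 1}, f (u : V))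
    (v w : V) (a : 𝕜) :
    T (lp.single 1 v a) w = if parent v = w ∧ depth v = depth w + 1 then l * a else 0 := by
  rw [hT]
  split_ifs with h
  · rw [tsum_eq_single ⟨v, h⟩]
    · simp
    · intro u hu
      have : (u : V) ≠ v := fun e => hu (Subtype.ext e)
      simp [this]
  · have : ∀ u : {u : V // parent u = w ∧ depth u = depth w + 1},
        (lp.single 1 v a : lp (fun _ : V => 𝕜) 1) (u : V) = 0 := by
      intro u
      have : (u : V) ≠ v := fun e => h (e ▸ u.2)
      simp [this]
    simp only [this, tsum_zero, mul_zero]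

open Classical in
theorem rolewicz_single_of_depth
    (hT : ∀ (f : lp (fun _ : V => 𝕜) 1) (v : V),
      T f v = l * ∑' u : {u : V // parent u = v ∧ depth u = depth v + 1}, f (u : V))
    {v w : V} (hp : parent v = w) (hd : depth v = depth w + 1) (a : 𝕜) :
    T (lp.single 1 v a) = lp.single 1 w (l * a) := by
  ext u
  rw [rolewicz_single hT]
  by_cases h : u = w
  · subst h; simp [hp, hd]
  · have : ¬ (parent v = u ∧ depth v = depth u + 1) := fun e => h (e.1.symm.trans hp)
    simp [h, this]

open Classical in
theorem rolewicz_single_root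
    (hdepth0 : depth root = 0)
    (hT : ∀ (f : lp (fun _ : V => 𝕜) 1) (v : V),
      T f v = l * ∑' u : {u : V // parent u = v ∧ depth u = depth v + 1}, f (u : V))
    (a : 𝕜) : T (lp.single 1 root a) = 0 := by
  ext u
  rw [rolewicz_single hT]
  simp [hdepth0]

open Classical in
theorem rolewicz_pow_single_eq_zero
    (hdepth0 : depth root = 0)
    (hdepth : ∀ v : V, v ≠ root → depth v = depth (parent v) + 1)
    (hT : ∀ (f : lp (fun _ : V => 𝕜) 1) (v : V),
      T f v = l * ∑' u : {u : V // parent u = v ∧ depth u = depth v + 1}, f (u : V))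
    (N : ℕ) (v : V) (a : 𝕜) (hN : depth v < N) : (T ^ N) (lp.single 1 v a) = 0 := by
  induction N generalizing v a with
  | zero => omega
  | succ n ih =>
    rw [pow_succ, mul_apply_eq_comp]
    by_cases h : v = root
    · rw [h, rolewicz_single_root hdepth0 hT, map_zero]
    · rw [rolewicz_single_of_depth hT rfl (hdepth v h)]
      exact ih _ _ (by have := hdepth v h; omega)

theorem norm_rolewicz_le
    (hdepth0 : depth root = 0)
    (hdepth : ∀ v : V, v ≠ root → depth v = depth (parent v) + 1)
    (hT : ∀ (f : lp (fun _ : V => 𝕜) 1) (v : V),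
      T f v = l * ∑' u : {u : V // parent u = v ∧ depth u = depth v + 1}, f (u : V))
    (f : lp (fun _ : V => 𝕜) 1) : ‖T f‖ ≤ ‖l‖ * ‖f‖ := by
  classical
  have h1 := (lp.hasSum_single (p := 1) ENNReal.one_ne_top f).mapL T
  have h2 : HasSum (fun v => ‖f v‖) ‖f‖ := by
    simpa using lp.hasSum_norm (p := 1) (by simp) f
  rw [← h1.tsum_eq]
  refine tsum_of_norm_bounded (h2.mul_left ‖l‖) fun v => ?_
  by_cases h : v = root
  · subst h
    rw [rolewicz_single_root hdepth0 hT, norm_zero]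
    positivity
  · rw [rolewicz_single_of_depth hT rfl (hdepth v h), lp.norm_single (by simp), norm_mul]

open Classical in
/-- Errors spread along a ray of descendants of `v` rebuild `a • e_v` after `T` has killed it. -/
theorem eventually_loopError_single
    (hdepth0 : depth root = 0)
    (hdepth : ∀ v : V, v ≠ root → depth v = depth (parent v) + 1)
    (hleafless : ∀ v : V, ∃ u : V, parent u = v ∧ depth u = depth v + 1)
    (hl : 1 ≤ ‖l‖)
    (hT : ∀ (f : lp (fun _ : V => 𝕜) 1) (v : V),
      T f v = l * ∑' u : {u : V // parent u = v ∧ depth u = depth v + 1}, f (u : V))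
    (v : V) (a : 𝕜) {δ : ℝ} (hδ : 0 < δ) :
    ∀ᶠ N in atTop, LoopError T N δ (lp.single 1 v a) := by
  choose c hc using hleafless
  have hl0 : l ≠ 0 := by rintro rfl; simp at hl; linarith
  have hlim : Tendsto (fun N : ℕ => ‖a‖ / (N : ℝ)) atTop (nhds 0) :=
    tendsto_const_div_atTop_nhds_zero_nat _
  have hpow : ∀ (k : ℕ) (b : 𝕜),
      (T ^ k) (lp.single 1 (c^[k] v) b) = lp.single 1 v (l ^ k * b) := by
    intro k
    induction k with
    | zero => simp
    | succ k ih =>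
      intro b
      rw [pow_succ, mul_apply_eq_comp, iterate_succ_apply',
        rolewicz_single_of_depth hT (hc _).1 (hc _).2, ih, pow_succ, mul_assoc]
  filter_upwards [hlim.eventually (gt_mem_nhds hδ), eventually_gt_atTop (depth v)] with N hN hNv
  have hN0 : (N : 𝕜) ≠ 0 := by
    rw [Nat.cast_ne_zero]; omega
  refine ⟨fun k => lp.single 1 (c^[k] v) (a / N / l ^ k), fun k => ?_, ?_⟩
  · rw [lp.norm_single (by simp), norm_div, norm_div, norm_pow, RCLike.norm_natCast]
    exact (div_le_self (by positivity) (one_le_pow₀ hl)).trans_lt hN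
  · rw [rolewicz_pow_single_eq_zero hdepth0 hdepth hT N v a hNv, zero_add]
    have h : ∀ k, (T ^ k) (lp.single 1 (c^[k] v) (a / N / l ^ k)) = lp.single 1 v (a / N) := by
      intro k
      rw [hpow, mul_div_cancel₀ _ (pow_ne_zero k hl0)]
    simp only [h, Finset.sum_const, Finset.card_range]
    rw [← Nat.cast_smul_eq_nsmul 𝕜, ← lp.single_smul, smul_eq_mul, mul_div_cancel₀ _ hN0]

end Tree

/-- The Rolewicz operator `λB` on `ℓ¹(V)` over a rooted leafless directed tree is
chain recurrent if and only if `|λ| ≥ 1`. -/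
theorem stmt14 {V : Type*} [Countable V] {𝕜 : Type*} [RCLike 𝕜]
    (root : V) (parent : V → V) (depth : V → ℕ)
    (hroot : parent root = root) (hdepth0 : depth root = 0)
    (hdepth : ∀ v : V, v ≠ root → depth v = depth (parent v) + 1)
    (hleafless : ∀ v : V, ∃ u : V, parent u = v ∧ depth u = depth v + 1)
    (l : 𝕜) (hl : l ≠ 0)
    (T : lp (fun _ : V => 𝕜) 1 →L[𝕜] lp (fun _ : V => 𝕜) 1)
    (hT : ∀ (f : lp (fun _ : V => 𝕜) 1) (v : V),
      T f v = l * ∑' u : {u : V // parent u = v ∧ depth u = depth v + 1}, f (u : V)) :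
    ChainRecurrent (fun f => T f) ↔ 1 ≤ ‖l‖ := by
  classical
  constructor
  · intro h
    by_contra! hlt
    refine not_chainRecurrent_of_contraction T (norm_nonneg l) hlt
      (norm_rolewicz_le hdepth0 hdepth hT) (x := lp.single 1 root 1) ?_ h
    rw [lp.norm_single (by simp), norm_one]
  · intro hl1 x δ hδ
    have hfin : ∀ (s : Finset V) (ε : ℝ), 0 < ε →
        ∀ᶠ N in atTop, LoopError T N ε (∑ v ∈ s, lp.single 1 v (x v)) := by
      intro s
      induction s using Finset.induction_on with
      | empty =>
        intro ε hε
        exact Eventually.of_forall fun N => loopError_of_small T N (by simpa using hε)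
      | insert v s hv ih =>
        intro ε hε
        rw [Finset.sum_insert hv]
        filter_upwards [eventually_loopError_single hdepth0 hdepth hleafless hl1 hT v (x v)
          (half_pos hε), ih (ε / 2) (half_pos hε)] with N h1 h2
        simpa using h1.add h2
    have hcont : Tendsto (fun s : Finset V =>
        ‖(x - ∑ v ∈ s, lp.single 1 v (x v)) - T (x - ∑ v ∈ s, lp.single 1 v (x v))‖)
        atTop (nhds 0) := by
      have h1 : Tendsto (fun s : Finset V => x - ∑ v ∈ s, lp.single 1 v (x v)) atTop
          (nhds 0) := by
        simpa using (tendsto_const_nhds (x := x)).sub (lp.hasSum_single (p := 1) ENNReal.one_ne_top x)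
      have h2 : Continuous fun z => ‖z - T z‖ := by fun_prop
      have h3 := (h2.tendsto 0).comp h1
      rwa [map_zero, sub_zero, norm_zero] at h3
    obtain ⟨s, hs⟩ := (hcont.eventually (gt_mem_nhds (half_pos hδ))).exists
    obtain ⟨N, hN, hN1⟩ := ((hfin s (δ / 2) (half_pos hδ)).and (eventually_ge_atTop 1)).exists
    refine LoopError.hasDeltaChain hN1 ?_
    simpa using hN.add (loopError_of_small T N hs)
end
end
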